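/- arXiv:math/0209109 — 2 statements merged into one kernel-verified Lean document; each statement's English description precedes it below -/
import Mathlib

section
/- For all n ≥ 1 and r, s, t ≥ 1 with r + s + t = n + 2, and for every ordered partition u of {1,…,n}: writing Δ_{r+s−1,t}(u) = (u′, u″) and Δ_{r,s}(u′) = (u′_1, u′_2), and writing Δ_{r,s+t−1}(u) = (w′, w″) and Δ_{s,t}(w″) = (w″_1, w″_2), one has (u′_1, u′_2, u″) = (w′, w″_1, w″_2); i.e. the projections Δ_{r,s} are coassociative: (Δ_{r,s} × 1) ∘ Δ_{r+s−1,t} = (1 × Δ_{s,t}) ∘ Δ_{r,s+t−1}. -/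
namespace SU

/-- `L` is an ordered partition of the finite set `S`. -/
def IsOrderedPartition (S : Finset ℕ) (L : List (Finset ℕ)) : Prop :=
  (∀ B ∈ L, B ≠ ∅) ∧ List.Pairwise Disjoint L ∧ L.foldr (· ∪ ·) ∅ = S

/-- delete empty blocks. -/
def remEmpty (L : List (Finset ℕ)) : List (Finset ℕ) :=
  L.filter (fun s => decide (s ≠ ∅))

/-- translate all blocks down by `z`. -/
def shiftDown (L : List (Finset ℕ)) (z : ℕ) : List (Finset ℕ) :=
  L.map (fun s => s.image (fun x => x - z))

/-- The projection `Δ_{r,s}` (`r + s = m + 1`) from ordered partitions of `{1,…,m}` to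
pairs of ordered partitions of `{1,…,r}` and `{1,…,s}`:
(1) if some block contains `{1,…,r}`, the first factor is `{1,…,r}` and the second is
obtained by deleting `{1,…,r−1}` and translating by `r−1`;
(2) otherwise, if some block contains `{m−s+1,…,m}`, the second factor is `{1,…,s}` and
the first is obtained by deleting `{m−s+2,…,m}`;
(3) otherwise both deletions are performed, one on each factor.
Empty blocks are deleted throughout. -/
def deltaRS (m r s : ℕ) (L : List (Finset ℕ)) :
    List (Finset ℕ) × List (Finset ℕ) :=
  if L.any (fun A => decide (Finset.Icc 1 r ⊆ A)) then
    ([Finset.Icc 1 r],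
      remEmpty (shiftDown (L.map (fun A => A \ Finset.Icc 1 (r-1))) (r-1)))
  else if L.any (fun A => decide (Finset.Icc (m - s + 1) m ⊆ A)) then
    (remEmpty (L.map (fun A => A \ Finset.Icc (m - s + 2) m)), [Finset.Icc 1 s])
  else
    (remEmpty (L.map (fun A => A \ Finset.Icc (m - s + 2) m)),
     remEmpty (shiftDown (L.map (fun A => A \ Finset.Icc 1 (r-1))) (r-1)))

def PP (z : ℕ) (T : Finset ℕ) (A : Finset ℕ) : Finset ℕ := T.filter (fun x => x + z ∈ A)

def FF (z : ℕ) (T : Finset ℕ) (L : List (Finset ℕ)) : List (Finset ℕ) :=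
  remEmpty (L.map (PP z T))

theorem mem_PP {z : ℕ} {T A : Finset ℕ} {x : ℕ} : x ∈ PP z T A ↔ x ∈ T ∧ x + z ∈ A := by
  simp [PP]

theorem mem_foldr (L : List (Finset ℕ)) (x : ℕ) :
    x ∈ L.foldr (· ∪ ·) ∅ ↔ ∃ A ∈ L, x ∈ A := by
  induction L with
  | nil => simp
  | cons A L ih => simp [ih]

theorem FF_part {S T : Finset ℕ} {z : ℕ} {L : List (Finset ℕ)} (hL : IsOrderedPartition S L)
    (h : ∀ x ∈ T, x + z ∈ S) : IsOrderedPartition T (FF z T L) := by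
  obtain ⟨h1, h2, h3⟩ := hL
  refine ⟨?_, ?_, ?_⟩
  · intro B hB
    simp only [FF, remEmpty, List.mem_filter, decide_eq_true_eq] at hB
    exact hB.2
  · apply List.Pairwise.filter
    rw [List.pairwise_map]
    refine h2.imp ?_
    intro A B hAB
    rw [Finset.disjoint_left] at hAB ⊢
    intro x hx hx'
    exact hAB (mem_PP.1 hx).2 (mem_PP.1 hx').2
  · ext x
    rw [mem_foldr]
    constructor
    · rintro ⟨A, hA, hx⟩
      simp only [FF, remEmpty, List.mem_filter, List.mem_map] at hA
      obtain ⟨⟨B, _, rfl⟩, _⟩ := hA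
      exact (mem_PP.1 hx).1
    · intro hx
      have := h x hx
      rw [← h3, mem_foldr] at this
      obtain ⟨A, hA, hxA⟩ := this
      have hm : x ∈ PP z T A := mem_PP.2 ⟨hx, hxA⟩
      refine ⟨PP z T A, ?_, hm⟩
      simp only [FF, remEmpty, List.mem_filter, List.mem_map, decide_eq_true_eq]
      exact ⟨⟨A, hA, rfl⟩, Finset.ne_empty_of_mem hm⟩

theorem part_single {T : Finset ℕ} {L : List (Finset ℕ)} (hL : IsOrderedPartition T L)
    (hT : T ∈ L) : L = [T] := by
  obtain ⟨h1, h2, h3⟩ := hL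
  have key : ∀ B ∈ L, ¬ Disjoint T B := by
    intro B hB hd
    obtain ⟨x, hx⟩ := Finset.nonempty_iff_ne_empty.2 (h1 B hB)
    have hxT : x ∈ T := by
      rw [← h3, mem_foldr]
      exact ⟨B, hB, hx⟩
    exact (Finset.disjoint_left.1 hd) hxT hx
  obtain ⟨l1, l2, rfl⟩ := List.append_of_mem hT
  rw [List.pairwise_append] at h2
  obtain ⟨_, ha, hb⟩ := h2
  rw [List.pairwise_cons] at ha
  have e1 : l1 = [] := by
    apply List.eq_nil_iff_forall_not_mem.2
    intro B hB
    exact key B (by simp [hB]) (hb B hB T (by simp)).symm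
  have e2 : l2 = [] := by
    apply List.eq_nil_iff_forall_not_mem.2
    intro B hB
    exact key B (by simp [hB]) (ha.1 B hB)
  simp [e1, e2]

theorem FF_single {S T : Finset ℕ} {z : ℕ} {L : List (Finset ℕ)} (hL : IsOrderedPartition S L)
    (h : ∀ x ∈ T, x + z ∈ S) (hT : T ≠ ∅) (A : Finset ℕ) (hA : A ∈ L)
    (hTA : ∀ x ∈ T, x + z ∈ A) : FF z T L = [T] := by
  apply part_single (FF_part hL h)
  have : PP z T A = T := by
    ext x
    rw [mem_PP]
    exact ⟨fun h => h.1, fun h => ⟨h, hTA x h⟩⟩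
  simp only [FF, remEmpty, List.mem_filter, List.mem_map, decide_eq_true_eq]
  exact ⟨⟨A, hA, this⟩, hT⟩

theorem FF_FF {z z' : ℕ} {T T' : Finset ℕ} (h : ∀ x ∈ T, x + z ∈ T') (L : List (Finset ℕ)) :
    FF z T (FF z' T' L) = FF (z + z') T L := by
  have hc : ∀ A, PP z T (PP z' T' A) = PP (z + z') T A := by
    intro A
    ext x
    simp only [mem_PP, add_assoc]
    exact ⟨fun h => ⟨h.1, h.2.2⟩, fun hx => ⟨hx.1, h x hx.1, hx.2⟩⟩
  induction L with
  | nil => rfl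
  | cons A L ih =>
    simp only [FF, remEmpty, List.map_cons] at ih ⊢
    by_cases h1 : PP z' T' A = ∅
    · have h2 : PP (z + z') T A = ∅ := by
        rw [← hc, h1]
        simp [PP]
      rw [List.filter_cons_of_neg (by simpa using h1), List.filter_cons_of_neg (by simpa using h2)]
      exact ih
    · rw [List.filter_cons_of_pos (by simpa using h1), List.map_cons, hc, List.filter_cons,
        List.filter_cons, ih]

theorem delta_eq {m r s : ℕ} (hr : 1 ≤ r) (hs : 1 ≤ s) (h : r + s = m + 1)
    {L : List (Finset ℕ)} (hL : IsOrderedPartition (Finset.Icc 1 m) L) :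
    deltaRS m r s L = (FF 0 (Finset.Icc 1 r) L, FF (r-1) (Finset.Icc 1 s) L) := by
  have hsub : ∀ A ∈ L, ∀ x ∈ A, 1 ≤ x ∧ x ≤ m := by
    intro A hA x hx
    rw [← Finset.mem_Icc, ← hL.2.2, mem_foldr]
    exact ⟨A, hA, hx⟩
  have e1 : remEmpty (L.map (fun A => A \ Finset.Icc (m - s + 2) m))
      = FF 0 (Finset.Icc 1 r) L := by
    unfold FF
    congr 1
    apply List.map_congr_left
    intro A hA
    ext x
    have := hsub A hA x
    simp only [Finset.mem_sdiff, mem_PP, Finset.mem_Icc, add_zero]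
    constructor
    · rintro ⟨h1, h2⟩
      have := this h1
      refine ⟨by omega, h1⟩
    · rintro ⟨h1, h2⟩
      refine ⟨h2, by omega⟩
  have e2 : remEmpty (shiftDown (L.map (fun A => A \ Finset.Icc 1 (r-1))) (r-1))
      = FF (r-1) (Finset.Icc 1 s) L := by
    unfold FF shiftDown
    rw [List.map_map]
    congr 1
    apply List.map_congr_left
    intro A hA
    ext x
    simp only [Function.comp, Finset.mem_image, Finset.mem_sdiff, mem_PP, Finset.mem_Icc]
    constructor
    · rintro ⟨y, ⟨h1, h2⟩, rfl⟩
      have := hsub A hA y h1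
      refine ⟨by omega, ?_⟩
      have e : y - (r-1) + (r-1) = y := by omega
      rwa [e]
    · rintro ⟨h1, h2⟩
      exact ⟨x + (r-1), ⟨h2, by omega⟩, by omega⟩
  unfold deltaRS
  rw [e1, e2]
  split_ifs with c1 c2
  · simp only [List.any_eq_true, decide_eq_true_eq] at c1
    obtain ⟨A, hA, hs'⟩ := c1
    rw [FF_single (z := 0) (T := Finset.Icc 1 r) hL _ _ A hA]
    · intro x hx
      exact hs' hx
    · intro x hx
      rw [Finset.mem_Icc] at hx ⊢
      omega
    · exact Finset.ne_empty_of_mem (a := 1) (by simpa using hr)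
  · simp only [List.any_eq_true, decide_eq_true_eq] at c2
    obtain ⟨A, hA, hs'⟩ := c2
    rw [FF_single (z := r-1) (T := Finset.Icc 1 s) hL _ _ A hA]
    · intro x hx
      apply hs'
      rw [Finset.mem_Icc] at hx ⊢
      omega
    · intro x hx
      rw [Finset.mem_Icc] at hx ⊢
      omega
    · exact Finset.ne_empty_of_mem (a := 1) (by simpa using hs)
  · rfl

/-- Coassociativity of the projections `Δ_{r,s}`:
`(Δ_{r,s} × 1) ∘ Δ_{r+s−1,t} = (1 × Δ_{s,t}) ∘ Δ_{r,s+t−1}` on every ordered partition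
of `{1,…,n}`, for `r + s + t = n + 2`. -/
theorem statement12 (n r s t : ℕ) (hn : 1 ≤ n) (hr : 1 ≤ r) (hs : 1 ≤ s) (ht : 1 ≤ t)
    (hsum : r + s + t = n + 2) (L : List (Finset ℕ))
    (hL : IsOrderedPartition (Finset.Icc 1 n) L) :
    ((deltaRS (r+s-1) r s (deltaRS n (r+s-1) t L).1).1,
     (deltaRS (r+s-1) r s (deltaRS n (r+s-1) t L).1).2,
     (deltaRS n (r+s-1) t L).2) =
    ((deltaRS n r (s+t-1) L).1,
     (deltaRS (s+t-1) s t (deltaRS n r (s+t-1) L).2).1,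
     (deltaRS (s+t-1) s t (deltaRS n r (s+t-1) L).2).2) := by
  have aux : ∀ a b z : ℕ, a + z ≤ b → ∀ x ∈ Finset.Icc 1 a, x + z ∈ Finset.Icc 1 b := by
    intro a b z hab x hx
    rw [Finset.mem_Icc] at hx ⊢
    omega
  rw [delta_eq (m := n) (r := r+s-1) (s := t) (by omega) ht (by omega) hL,
    delta_eq (m := n) (r := r) (s := s+t-1) hr (by omega) (by omega) hL]
  have p1 := FF_part hL (aux (r+s-1) n 0 (by omega))
  have p2 := FF_part hL (aux (s+t-1) n (r-1) (by omega))
  dsimp only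
  rw [delta_eq hr hs (by omega) p1, delta_eq hs ht (by omega) p2]
  dsimp only
  rw [FF_FF (aux _ _ _ (by omega)), FF_FF (aux _ _ _ (by omega)), FF_FF (aux _ _ _ (by omega)),
    FF_FF (aux _ _ _ (by omega))]
  have e : s - 1 + (r - 1) = r + s - 1 - 1 := by omega
  simp only [add_zero, zero_add, e]

end SU
end

section
/- Let R be a commutative ring with unity, A a ℤ-graded R-module, and for each k ≥ 1 let φ^k : A^{⊗k} → A be a homogeneous map of degree k − 2. If (A, φ^n)_{n≥1} is an A_∞-algebra, i.e. the coderivation-type map d on ⊕_{n≥1}(↑A)^{⊗n} defined by d = Σ_{n≥1} Σ_{k=1}^{n} Σ_{i=0}^{n−k} (−1)^{⌊(n−k)/2⌋ + i(k+1)} ↑^{⊗(n−k+1)} ∘ φ^k_{i,n−k−i} ∘ ↓^{⊗n} satisfies d² = 0, then for every n ≥ 1 the quadratic relations Σ_{ℓ=0}^{n−1} Σ_{i=0}^{n−ℓ−1} (−1)^{ℓ(i+1)} φ^{n−ℓ} ∘ φ^{ℓ+1}_{i,n−ℓ−1−i} = 0 hold as maps A^{⊗n} → A. -/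
open TensorProduct

namespace SU18

universe u
variable (R : Type u) [CommRing R] (A : ℤ → Type u)
  [∀ i, AddCommGroup (A i)] [∀ i, Module R (A i)]

/-- iterated tensor product of graded pieces of `A` along a list of degrees
(`T [] = R`, `T (d :: l) = A d ⊗ T l`). -/
noncomputable def Tc : List ℤ → ModuleCat.{u} R
  | [] => ModuleCat.of R R
  | d :: l => ModuleCat.of R (A d ⊗[R] (Tc l))

/-- the underlying module of `Tc`. -/
abbrev Tm (l : List ℤ) : Type u := (Tc R A l : Type u)

/-- splitting of an iterated tensor product along a concatenation. -/
noncomputable def tsplit :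
    (l₁ l₂ : List ℤ) → (Tm R A (l₁ ++ l₂) ≃ₗ[R] (Tm R A l₁ ⊗[R] Tm R A l₂))
  | [], l₂ => (TensorProduct.lid R (Tm R A l₂)).symm
  | d :: l₁, l₂ =>
      (TensorProduct.congr (LinearEquiv.refl R (A d)) (tsplit l₁ l₂)).trans
        (TensorProduct.assoc R (A d) (Tm R A l₁) (Tm R A l₂)).symm

noncomputable def lcast {l₁ l₂ : List ℤ} (h : l₁ = l₂) : Tm R A l₁ ≃ₗ[R] Tm R A l₂ := by
  subst h; exact LinearEquiv.refl R _

end SU18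
namespace SU18

universe u
variable (R : Type u) [CommRing R] (A : ℤ → Type u)
  [∀ i, AddCommGroup (A i)] [∀ i, Module R (A i)]

def sgnz (z : ℤ) : ℤ := if Even z then 1 else -1

/-- Koszul exponent for applying a tensor power of maps of degree `±1` to a component
with degree list `l`: `Σ_j (m−1−j)·l_j`. -/
def kexp (l : List ℤ) : ℤ :=
  ∑ j ∈ Finset.range l.length, ((l.length - 1 - j : ℕ) : ℤ) * l.getD j 0

/-- the degree list obtained by replacing the `k` entries starting at position `i`
by their sum plus `c`. -/
def barList (ds : List ℤ) (i k : ℕ) (c : ℤ) : List ℤ :=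
  ds.take i ++ (((ds.drop i).take k).sum + c) :: (ds.drop i).drop k

lemma mapshift (l : List ℤ) : (l.map (fun e => e + 1)).map (fun e => e - 1) = l := by
  induction l with
  | nil => simp
  | cons a l ih => simp [ih]

/-- `1^{⊗i} ⊗ φ^k ⊗ 1^{⊗(j)}` (without the Koszul sign, which only depends on the
degree list and is applied separately as a scalar). -/
noncomputable def extMap (c : ℤ)
    (φk : (l : List ℤ) → Tm R A l →ₗ[R] A (l.sum + c)) (ds : List ℤ) (i k : ℕ) :
    Tm R A ds →ₗ[R] Tm R A (barList ds i k c) :=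
  (tsplit R A (ds.take i)
      ((((ds.drop i).take k).sum + c) :: (ds.drop i).drop k)).symm.toLinearMap
    ∘ₗ (TensorProduct.map LinearMap.id
          (TensorProduct.map (φk ((ds.drop i).take k)) LinearMap.id))
    ∘ₗ (TensorProduct.congr (LinearEquiv.refl R (Tm R A (ds.take i)))
          (tsplit R A ((ds.drop i).take k) ((ds.drop i).drop k))).toLinearMap
    ∘ₗ (tsplit R A (ds.take i) ((ds.drop i).take k ++ (ds.drop i).drop k)).toLinearMap
    ∘ₗ (lcast R A (by rw [List.take_append_drop, List.take_append_drop])).toLinearMap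

end SU18
namespace SU18

universe u
variable (R : Type u) [CommRing R] (A : ℤ → Type u)
  [∀ i, AddCommGroup (A i)] [∀ i, Module R (A i)]

/-- `⊕_{n≥1} (↑A)^{⊗n}`: the direct sum over nonempty lists of suspended degrees,
the component of ↑-degree list `es` being `T(es − 1)`. -/
abbrev Bar : Type u :=
  DirectSum {l : List ℤ // l ≠ []} (fun l => Tm R A (l.val.map (fun e => e - 1)))

/-- the tilde-bar differential
`d = Σ_{n≥1} Σ_{k=1}^{n} Σ_{i=0}^{n−k} (−1)^{⌊(n−k)/2⌋+i(k+1)} ↑^{⊗(n−k+1)} ∘ φ^k_{i,n−k−i} ∘ ↓^{⊗n}`,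
where `↑^{⊗m}`, `↓^{⊗m}` and `φ^k_{i,j}` carry Koszul signs (these are scalars on each
component, recorded by `sgnz ∘ kexp` and the `sgnz (… * (take i …).sum)` factor). -/
noncomputable def barD
    (φ : (k : ℕ) → (l : List ℤ) → Tm R A l →ₗ[R] A (l.sum + ((k : ℤ) - 2))) :
    Bar R A →ₗ[R] Bar R A :=
  DirectSum.toModule R _ _ (fun es =>
    ∑ k ∈ Finset.Icc 1 es.val.length,
      ∑ i ∈ Finset.range (es.val.length - k + 1),
        ((-1 : ℤ) ^ ((es.val.length - k) / 2 + i * (k + 1)) *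
            sgnz (kexp es.val) *
            sgnz (((k : ℤ) - 2) * ((es.val.map (fun e => e - 1)).take i).sum) *
            sgnz (kexp (barList (es.val.map (fun e => e - 1)) i k ((k : ℤ) - 2)))) •
          ((DirectSum.lof R {l : List ℤ // l ≠ []}
              (fun l => Tm R A (l.val.map (fun e => e - 1)))
              ⟨(barList (es.val.map (fun e => e - 1)) i k ((k : ℤ) - 2)).map
                  (fun e => e + 1),
                by simp [barList]⟩) ∘ₗ
            (lcast R A (mapshift _)).symm.toLinearMap ∘ₗ
            (extMap R A ((k : ℤ) - 2) (φ k) (es.val.map (fun e => e - 1)) i k)))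

end SU18
namespace SU18

universe u

section helpers

variable (R : Type u) [CommRing R] (A : ℤ → Type u)
  [∀ i, AddCommGroup (A i)] [∀ i, Module R (A i)]

lemma sgnz_add (a b : ℤ) : sgnz (a + b) = sgnz a * sgnz b := by
  unfold sgnz
  by_cases ha : Even a <;> by_cases hb : Even b <;> simp [Int.even_add, ha, hb]

lemma sgnz_sq (a : ℤ) : sgnz a * sgnz a = 1 := by
  unfold sgnz; split_ifs <;> simp

lemma sgnz_nat (a : ℕ) : sgnz (a : ℤ) = (-1) ^ a := by
  unfold sgnz
  by_cases h : Even a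
  · simp [h]
  · simp [h, (Nat.not_even_iff_odd.mp h).neg_one_pow]

lemma kexp_shift (l : List ℤ) :
    kexp (l.map (fun e => e + 1)) = kexp l + ((l.length * (l.length - 1) / 2 : ℕ) : ℤ) := by
  have h1 : ((l.length * (l.length - 1) / 2 : ℕ) : ℤ)
      = ∑ j ∈ Finset.range l.length, ((l.length - 1 - j : ℕ) : ℤ) := by
    rw [← Finset.sum_range_id, ← Finset.sum_range_reflect]
    push_cast
    rfl
  rw [h1]
  unfold kexp
  rw [List.length_map, ← Finset.sum_add_distrib]
  refine Finset.sum_congr rfl fun j hj => ?_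
  have hj' : j < l.length := Finset.mem_range.mp hj
  have : (l.map (fun e => e + 1)).getD j 0 = l.getD j 0 + 1 := by
    simp [List.getD_eq_getElem?_getD, hj']
  rw [this]; ring

lemma sign_aux (m : ℕ) : (-1 : ℤ) ^ (m / 2) * (-1) ^ ((m + 1) * m / 2) = (-1) ^ m := by
  have h : ∀ m : ℕ, (m + 1) * m / 2 + m / 2 + m + 0 = 2 * (((m + 1) * m / 2 + m / 2 + m) / 2) := by
    intro m
    have : Even ((m + 1) * m / 2 + m / 2 + m) := by
      obtain ⟨q, hq | hq⟩ := Nat.even_or_odd' m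
      · subst hq
        have e1 : (2 * q + 1) * (2 * q) / 2 = (2 * q + 1) * q := by
          rw [show (2 * q + 1) * (2 * q) = 2 * ((2 * q + 1) * q) by ring]; omega
        rw [e1, show 2 * q / 2 = q by omega]
        exact ⟨q * q + 2 * q, by ring⟩
      · subst hq
        have e1 : (2 * q + 1 + 1) * (2 * q + 1) / 2 = (2 * q + 1) * (q + 1) := by
          rw [show (2 * q + 1 + 1) * (2 * q + 1) = 2 * ((2 * q + 1) * (q + 1)) by ring]; omega
        rw [e1, show (2 * q + 1) / 2 = q by omega]
        exact ⟨q * q + 3 * q + 1, by ring⟩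
    obtain ⟨r, hr⟩ := this
    omega
  have h2 := h m
  have h3 : (-1 : ℤ) ^ (m / 2) * (-1) ^ ((m + 1) * m / 2) * (-1) ^ m = 1 := by
    rw [← pow_add, ← pow_add, show m / 2 + (m + 1) * m / 2 + m
      = 2 * (((m + 1) * m / 2 + m / 2 + m) / 2) by omega, pow_mul]
    simp
  have h4 : (-1 : ℤ) ^ m * (-1) ^ m = 1 := by rw [← mul_pow]; simp
  calc _ = (-1 : ℤ) ^ (m / 2) * (-1) ^ ((m + 1) * m / 2) * ((-1) ^ m * (-1) ^ m) := by
        rw [h4, mul_one]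
    _ = _ := by rw [← mul_assoc, h3, one_mul]

/-- Projection of one component to the part of tensor length one. -/
noncomputable def Gp : (l : List ℤ) → Tm R A l →ₗ[R] DirectSum ℤ A
  | [] => 0
  | [d] => DirectSum.lof R ℤ A d ∘ₗ (TensorProduct.rid R (A d)).toLinearMap
  | _ :: _ :: _ => 0

lemma Gp_zero (l : List ℤ) (h : l.length ≠ 1) : Gp R A l = 0 := by
  match l, h with
  | [], _ => rfl
  | [d], h => simp at h
  | _ :: _ :: _, _ => rfl

lemma fam_lcast {M : Type*} [AddCommGroup M] [Module R M]
    (F : (l : List ℤ) → Tm R A l →ₗ[R] M) {l₁ l₂ : List ℤ} (h : l₁ = l₂) :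
    F l₁ ∘ₗ (lcast R A h).symm.toLinearMap = F l₂ := by
  subst h; rfl

noncomputable def Pp : Bar R A →ₗ[R] DirectSum ℤ A :=
  DirectSum.toModule R _ _ (fun es => Gp R A (es.val.map (fun e => e - 1)))

lemma lcast_cons (d : ℤ) {l l' : List ℤ} (h : l = l') (h' : d :: l = d :: l')
    (a : A d) (x : Tm R A l) :
    lcast R A h' (show Tm R A (d :: l) from a ⊗ₜ[R] x) = a ⊗ₜ[R] lcast R A h x := by
  subst h; rfl

lemma tsplit_nil (q : List ℤ) (h : q = q ++ []) (x : Tm R A q) :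
    tsplit R A q [] (lcast R A h x) = x ⊗ₜ[R] (1 : R) := by
  induction q with
  | nil =>
    change (TensorProduct.lid R R).symm x = x ⊗ₜ[R] (1 : R)
    change (1 : R) ⊗ₜ[R] x = x ⊗ₜ[R] (1 : R)
    have key : ∀ y : R, (1 : R) ⊗ₜ[R] y = y ⊗ₜ[R] (1 : R) := by
      intro y
      have : y = y • (1 : R) := by simp
      conv_lhs => rw [this, ← TensorProduct.smul_tmul]
      simp
    exact key x
  | cons d l ih =>
    have h0 : l = l ++ [] := by simp
    let f : A d ⊗[R] Tm R A l →ₗ[R] Tm R A (d :: l) ⊗[R] Tm R A [] :=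
      (tsplit R A (d :: l) []).toLinearMap ∘ₗ (lcast R A h).toLinearMap
    let g : A d ⊗[R] Tm R A l →ₗ[R] Tm R A (d :: l) ⊗[R] Tm R A [] :=
      (TensorProduct.mk R (Tm R A (d :: l)) (Tm R A [])).flip (1 : R)
    have hfg : f = g := by
      refine TensorProduct.ext' fun a x => ?_
      change tsplit R A (d :: l) [] (lcast R A h (a ⊗ₜ[R] x)) = _
      have e := lcast_cons R A d h0 h a x
      erw [e]
      change (TensorProduct.assoc R (A d) (Tm R A l) (Tm R A [])).symm
        (a ⊗ₜ[R] (tsplit R A l [] (lcast R A h0 x))) = _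
      rw [ih h0 x]
      rfl
    exact LinearMap.congr_fun hfg x

lemma Gp_ext_aux (c : ℤ) (φk : (l : List ℤ) → Tm R A l →ₗ[R] A (l.sum + c))
    (ds q r : List ℤ) (hq : q = ds) (hr : r = []) (h : ds = [] ++ (q ++ r)) :
    Gp R A ([] ++ (q.sum + c) :: r) ∘ₗ
    ((tsplit R A [] ((q.sum + c) :: r)).symm.toLinearMap
    ∘ₗ (TensorProduct.map LinearMap.id (TensorProduct.map (φk q) LinearMap.id))
    ∘ₗ (TensorProduct.congr (LinearEquiv.refl R (Tm R A [])) (tsplit R A q r)).toLinearMap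
    ∘ₗ (tsplit R A [] (q ++ r)).toLinearMap
    ∘ₗ (lcast R A h).toLinearMap) = DirectSum.lof R ℤ A (ds.sum + c) ∘ₗ φk ds := by
  subst hq hr
  refine LinearMap.ext fun x => ?_
  have e := tsplit_nil R A q h x
  change Gp R A [q.sum + c] ((TensorProduct.lid R (A (q.sum + c) ⊗[R] R)) ((1 : R) ⊗ₜ[R]
    (TensorProduct.map (φk q) LinearMap.id (tsplit R A q [] (lcast R A h x))))) = _
  rw [e]
  rw [TensorProduct.lid_tmul, one_smul]
  erw [TensorProduct.map_tmul]
  change DirectSum.lof R ℤ A _ (TensorProduct.rid R (A (q.sum + c)) (φk q x ⊗ₜ[R] (1 : R))) = _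
  simp

lemma Gp_ext (c : ℤ) (φk : (l : List ℤ) → Tm R A l →ₗ[R] A (l.sum + c))
    (ds : List ℤ) (n : ℕ) (hn : ds.length = n) :
    Gp R A (barList ds 0 n c) ∘ₗ extMap R A c φk ds 0 n
      = DirectSum.lof R ℤ A (ds.sum + c) ∘ₗ φk ds := by
  subst hn
  exact Gp_ext_aux R A c φk ds _ _ (by simp) (by simp) _

lemma barList_length (ds : List ℤ) (i k : ℕ) (c : ℤ) (h : i + k ≤ ds.length) :
    (barList ds i k c).length = ds.length - k + 1 := by
  simp [barList]; omega

lemma Pp_term (c : ℤ) (φk : (l : List ℤ) → Tm R A l →ₗ[R] A (l.sum + c))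
    (ds : List ℤ) (i k : ℕ) (h) :
    Pp R A ∘ₗ ((DirectSum.lof R {l : List ℤ // l ≠ []}
              (fun l => Tm R A (l.val.map (fun e => e - 1)))
              ⟨(barList ds i k c).map (fun e => e + 1), h⟩) ∘ₗ
            (lcast R A (mapshift _)).symm.toLinearMap ∘ₗ
            (extMap R A c φk ds i k)) = Gp R A (barList ds i k c) ∘ₗ extMap R A c φk ds i k := by
  have e : Pp R A ∘ₗ (DirectSum.lof R {l : List ℤ // l ≠ []}
              (fun l => Tm R A (l.val.map (fun e => e - 1)))
              ⟨(barList ds i k c).map (fun e => e + 1), h⟩)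
      = Gp R A (((barList ds i k c).map (fun e => e + 1)).map (fun e => e - 1)) := by
    ext x
    simp [Pp]
  rw [← LinearMap.comp_assoc, e, ← LinearMap.comp_assoc]
  rw [fam_lcast R A (Gp R A) (mapshift _)]

lemma comp_dsum {M N P : Type*} [AddCommGroup M] [Module R M] [AddCommGroup N] [Module R N]
    [AddCommGroup P] [Module R P] (Q : N →ₗ[R] P) (S : Finset ℕ) (T : ℕ → Finset ℕ)
    (s : ℕ → ℕ → ℤ) (F : ℕ → ℕ → (M →ₗ[R] N)) :
    Q ∘ₗ (∑ k ∈ S, ∑ i ∈ T k, s k i • F k i) = ∑ k ∈ S, ∑ i ∈ T k, s k i • (Q ∘ₗ F k i) := by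
  ext x
  simp [LinearMap.sum_apply]

/-- one term of the differential -/
noncomputable def bterm
    (φ : (k : ℕ) → (l : List ℤ) → Tm R A l →ₗ[R] A (l.sum + ((k : ℤ) - 2)))
    (es : {l : List ℤ // l ≠ []}) (k i : ℕ) :
    Tm R A (es.val.map (fun e => e - 1)) →ₗ[R] Bar R A :=
  ((DirectSum.lof R {l : List ℤ // l ≠ []}
              (fun l => Tm R A (l.val.map (fun e => e - 1)))
              ⟨(barList (es.val.map (fun e => e - 1)) i k ((k : ℤ) - 2)).map
                  (fun e => e + 1),
                by simp [barList]⟩) ∘ₗ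
            (lcast R A (mapshift _)).symm.toLinearMap ∘ₗ
            (extMap R A ((k : ℤ) - 2) (φ k) (es.val.map (fun e => e - 1)) i k))

/-- one sign of the differential -/
def bsign (es : List ℤ) (k i : ℕ) : ℤ :=
  ((-1 : ℤ) ^ ((es.length - k) / 2 + i * (k + 1)) *
            sgnz (kexp es) *
            sgnz (((k : ℤ) - 2) * ((es.map (fun e => e - 1)).take i).sum) *
            sgnz (kexp (barList (es.map (fun e => e - 1)) i k ((k : ℤ) - 2))))

lemma barD_lof (φ : (k : ℕ) → (l : List ℤ) → Tm R A l →ₗ[R] A (l.sum + ((k : ℤ) - 2)))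
    (es : {l : List ℤ // l ≠ []}) :
    barD R A φ ∘ₗ DirectSum.lof R {l : List ℤ // l ≠ []}
              (fun l => Tm R A (l.val.map (fun e => e - 1))) es
      = ∑ k ∈ Finset.Icc 1 es.val.length,
      ∑ i ∈ Finset.range (es.val.length - k + 1), bsign es.val k i • bterm R A φ es k i := by
  refine LinearMap.ext fun x => ?_
  rw [LinearMap.comp_apply]
  unfold barD
  rw [DirectSum.toModule_lof]
  simp only [bsign, bterm]

lemma Pp_barD (φ : (k : ℕ) → (l : List ℤ) → Tm R A l →ₗ[R] A (l.sum + ((k : ℤ) - 2)))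
    (es : {l : List ℤ // l ≠ []}) :
    Pp R A ∘ₗ barD R A φ ∘ₗ DirectSum.lof R {l : List ℤ // l ≠ []}
              (fun l => Tm R A (l.val.map (fun e => e - 1))) es
      = sgnz (kexp es.val) • (DirectSum.lof R ℤ A _ ∘ₗ
          φ es.val.length (es.val.map (fun e => e - 1))) := by
  have hpos : 0 < es.val.length := List.length_pos_iff.mpr es.2
  have ht : ∀ k i, Pp R A ∘ₗ bterm R A φ es k i
      = Gp R A (barList (es.val.map (fun e => e - 1)) i k ((k : ℤ) - 2)) ∘ₗ
        extMap R A ((k : ℤ) - 2) (φ k) (es.val.map (fun e => e - 1)) i k :=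
    fun k i => Pp_term R A _ _ _ i k _
  rw [barD_lof, comp_dsum]
  rw [Finset.sum_eq_single es.val.length]
  · rw [Nat.sub_self, zero_add, Finset.sum_range_one, ht, Gp_ext _ _ _ _ _ _ (by simp)]
    congr 1
    have h1 : ∀ c, kexp (barList (es.val.map (fun e => e - 1)) 0 es.val.length c) = 0 := by
      intro c
      have := barList_length (es.val.map (fun e => e - 1)) 0 es.val.length c (by simp)
      rw [List.length_map, Nat.sub_self] at this
      unfold kexp
      rw [this]
      simp
    unfold bsign
    rw [h1]
    simp [sgnz]
  · intro k hk hne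
    rw [Finset.mem_Icc] at hk
    refine Finset.sum_eq_zero fun i hi => ?_
    rw [Finset.mem_range] at hi
    rw [ht, Gp_zero, LinearMap.zero_comp, smul_zero]
    rw [barList_length _ _ _ _ (by rw [List.length_map]; omega), List.length_map]
    omega
  · intro h
    exact absurd (Finset.mem_Icc.mpr ⟨hpos, le_rfl⟩) h

lemma sign_main (n l i : ℕ) (hl : l < n) (a b kk s : ℤ) (m : ℕ) (hm : m = n - l)
    (hb : b = kk + ((m * (m - 1) / 2 : ℕ) : ℤ)) :
    (-1 : ℤ) ^ (l * (i + 1)) * s = (sgnz a * (-1) ^ (n - 1)) *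
      ((-1 : ℤ) ^ ((n - (l + 1)) / 2 + i * (l + 1 + 1)) * sgnz a * s * sgnz kk * sgnz b) := by
  obtain ⟨p, rfl⟩ : ∃ p, n = l + 1 + p := ⟨n - (l + 1), by omega⟩
  obtain rfl : m = p + 1 := by omega
  rw [hb, sgnz_add, sgnz_nat]
  have e1 := sign_aux p
  have e2 := sgnz_sq a
  have e3 := sgnz_sq kk
  rw [show l + 1 + p - (l + 1) = p by omega, show l + 1 + p - 1 = l + p by omega,
    show p + 1 - 1 = p by omega]
  have e4 : (-1 : ℤ) ^ p * (-1) ^ p = 1 := by rw [← mul_pow]; simp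
  have e5 : (-1 : ℤ) ^ i * (-1) ^ i = 1 := by rw [← mul_pow]; simp
  rw [show l * (i + 1) = l * i + l by ring, show i * (l + 1 + 1) = l * i + i + i by ring]
  simp only [pow_add]
  calc _ = (-1 : ℤ) ^ (l * i) * (-1) ^ l * s * 1 * 1 * 1 * 1 := by ring
    _ = (-1 : ℤ) ^ (l * i) * (-1) ^ l * s * (sgnz a * sgnz a) * (sgnz kk * sgnz kk)
        * ((-1 : ℤ) ^ p * (-1) ^ p) * ((-1 : ℤ) ^ i * (-1) ^ i) := by rw [e2, e3, e4, e5]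
    _ = (-1 : ℤ) ^ (l * i) * (-1) ^ l * s * (sgnz a * sgnz a) * (sgnz kk * sgnz kk)
        * (((-1 : ℤ) ^ (p / 2) * (-1) ^ ((p + 1) * p / 2)) * (-1 : ℤ) ^ p)
        * ((-1 : ℤ) ^ i * (-1) ^ i) := by rw [e1]
    _ = _ := by ring

lemma Pp_barD_term
    (φ : (k : ℕ) → (l : List ℤ) → Tm R A l →ₗ[R] A (l.sum + ((k : ℤ) - 2)))
    (bl : List ℤ) (h) (m : ℕ) (hm : bl.length = m) :
    Pp R A ∘ₗ barD R A φ ∘ₗ (DirectSum.lof R {l : List ℤ // l ≠ []}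
              (fun l => Tm R A (l.val.map (fun e => e - 1)))
              ⟨bl.map (fun e => e + 1), h⟩) ∘ₗ
            (lcast R A (mapshift _)).symm.toLinearMap
      = sgnz (kexp (bl.map (fun e => e + 1))) •
          (DirectSum.lof R ℤ A (bl.sum + ((m : ℤ) - 2)) ∘ₗ φ m bl) := by
  subst hm
  have e := Pp_barD R A φ ⟨bl.map (fun e => e + 1), h⟩
  have e2 := congrArg (fun F => F ∘ₗ (lcast R A (mapshift bl)).symm.toLinearMap) e
  refine Eq.trans e2 ?_
  have hl : (bl.map (fun e => e + 1)).length = bl.length := List.length_map _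
  change (sgnz (kexp (bl.map (fun e => e + 1))) • (fun l => DirectSum.lof R ℤ A
    (l.sum + (((bl.map (fun e => e + 1)).length : ℤ) - 2)) ∘ₗ
    φ (bl.map (fun e => e + 1)).length l) ((bl.map (fun e => e + 1)).map (fun e => e - 1))) ∘ₗ
    (lcast R A (mapshift bl)).symm.toLinearMap = _
  rw [hl, LinearMap.smul_comp, fam_lcast R A (fun l => DirectSum.lof R ℤ A
    (l.sum + ((bl.length : ℤ) - 2)) ∘ₗ φ bl.length l) (mapshift bl)]

end helpers

/-- If `(A, φⁿ)_{n≥1}` is an `A_∞`-algebra — i.e. the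
coderivation-type map `d` on `⊕_{n≥1}(↑A)^{⊗n}` built from the homogeneous degree
`k−2` operations `φ^k : A^{⊗k} → A` satisfies `d² = 0` — then for every `n ≥ 1` the
quadratic relations
`Σ_{ℓ=0}^{n−1} Σ_{i=0}^{n−ℓ−1} (−1)^{ℓ(i+1)} φ^{n−ℓ} ∘ φ^{ℓ+1}_{i,n−ℓ−1−i} = 0`
hold as maps `A^{⊗n} → A` (stated here on each degree component `ds` of `A^{⊗n}`,
with the common target summand of `⊕_d A_d`; the factor
`sgnz ((ℓ−1)·(deg x₁+⋯+deg x_i))` is the Koszul sign carried by `φ^{ℓ+1}_{i,n−ℓ−1−i}`). -/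
theorem statement18 (R : Type u) [CommRing R] (A : ℤ → Type u)
    [∀ i, AddCommGroup (A i)] [∀ i, Module R (A i)]
    (φ : (k : ℕ) → (l : List ℤ) → Tm R A l →ₗ[R] A (l.sum + ((k : ℤ) - 2)))
    (hd : (barD R A φ) ∘ₗ (barD R A φ) = 0) :
    ∀ n : ℕ, 1 ≤ n → ∀ ds : List ℤ, ds.length = n →
      (∑ l ∈ Finset.range n, ∑ i ∈ Finset.range (n - l),
        ((-1 : ℤ) ^ (l * (i + 1)) *
            sgnz ((((l : ℤ) + 1) - 2) * (ds.take i).sum)) •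
          ((DirectSum.lof R ℤ A
              ((barList ds i (l + 1) (((l : ℤ) + 1) - 2)).sum + (((n - l : ℕ) : ℤ) - 2))) ∘ₗ
            (φ (n - l) (barList ds i (l + 1) (((l : ℤ) + 1) - 2))) ∘ₗ
            (extMap R A (((l : ℤ) + 1) - 2) (φ (l + 1)) ds i (l + 1)))) = 0 := by
  intro n hn ds hds
  obtain ⟨es, rfl⟩ : ∃ es : List ℤ, ds = es.map (fun e => e - 1) :=
    ⟨ds.map (fun e => e + 1), (mapshift ds).symm⟩
  rw [List.length_map] at hds
  subst hds
  have hne : es ≠ [] := List.length_pos_iff.mp hn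
  have key : (Pp R A ∘ₗ barD R A φ) ∘ₗ (barD R A φ ∘ₗ DirectSum.lof R {l : List ℤ // l ≠ []}
              (fun l => Tm R A (l.val.map (fun e => e - 1))) ⟨es, hne⟩) = 0 := by
    refine LinearMap.ext fun x => ?_
    have := LinearMap.congr_fun hd (DirectSum.lof R {l : List ℤ // l ≠ []}
              (fun l => Tm R A (l.val.map (fun e => e - 1))) ⟨es, hne⟩ x)
    exact (congrArg (Pp R A) this).trans (map_zero _)
  rw [barD_lof, comp_dsum] at key
  have h1 : Finset.Icc 1 es.length = Finset.Ico (0 + 1) (es.length + 1) := by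
    ext; simp only [Finset.mem_Icc, Finset.mem_Ico]; omega
  rw [h1, ← Finset.sum_Ico_add', ← Finset.range_eq_Ico] at key
  rw [← smul_zero (sgnz (kexp es) * (-1 : ℤ) ^ (es.length - 1)), ← key, Finset.smul_sum]
  refine Finset.sum_congr rfl fun l hl => ?_
  rw [Finset.mem_range] at hl
  rw [Finset.smul_sum, show es.length - (l + 1) + 1 = es.length - l by omega]
  refine Finset.sum_congr rfl fun i hi => ?_
  rw [Finset.mem_range] at hi
  have hlen := barList_length (es.map (fun e => e - 1)) i (l + 1) (((l + 1 : ℕ) : ℤ) - 2)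
    (by rw [List.length_map]; omega)
  rw [List.length_map, show es.length - (l + 1) + 1 = es.length - l by omega] at hlen
  have ht := Pp_barD_term R A φ
    (barList (es.map (fun e => e - 1)) i (l + 1) (((l + 1 : ℕ) : ℤ) - 2))
    (by simp [barList]) _ hlen
  have ht2 : (Pp R A ∘ₗ barD R A φ) ∘ₗ bterm R A φ ⟨es, hne⟩ (l + 1) i = _ :=
    congrArg (fun F => F ∘ₗ
      extMap R A (((l + 1 : ℕ) : ℤ) - 2) (φ (l + 1)) (es.map (fun e => e - 1)) i (l + 1)) ht
  rw [ht2, LinearMap.smul_comp, smul_smul, smul_smul]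
  have hs := sign_main es.length l i hl (kexp es) _ _
    (sgnz ((((l : ℤ) + 1) - 2) * ((es.map (fun e => e - 1)).take i).sum)) _ hlen
    (kexp_shift (barList (es.map (fun e => e - 1)) i (l + 1) (((l + 1 : ℕ) : ℤ) - 2)))
  rw [hs]
  unfold bsign
  rw [mul_assoc (sgnz (kexp es) * (-1 : ℤ) ^ (es.length - 1))]
  rfl

end SU18
end
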